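/- Let A, B, V ∈ ℝ² be affinely independent, K = convexHull{A, B, V}, β the affine function with β(V) = 1, β(A) = β(B) = 0, and s(x) = e(β(x)) with e(t) = (56t³ − 63t² + 18t − 1)/10. If v : ℝ² → ℝ² has both components polynomials of total degree at most 4 and v vanishes identically on the two segments [V, A] and [V, B], then ∫_K s(x) · div v(x) dx = 0. -/

import Mathlib

open MeasureTheory

/-- The pointwise divergence of a planar vector field, evaluated via Fréchet
derivatives of the two components. -/
noncomputable def pdiv (v : ℝ × ℝ → ℝ × ℝ) (x : ℝ × ℝ) : ℝ :=
  fderiv ℝ (fun y => (v y).1) x (1, 0) + fderiv ℝ (fun y => (v y).2) x (0, 1)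

/-!
Cut the triangle into the segments issuing from `V`. In the coordinates `(σ, r)`, where `r` is the
position on such a segment and `σ` selects its end point on `[A, B]`, the area element is `2|K| r`
and `β = 1 - r`, while a cubic polynomial becomes a cubic in `r`. Up to scaling, `e` is the cubic
characterised by `∫₀¹ e(1 - r) r ^ n dr = 0` for `n = 2, 3, 4`. Integrating against `s` along each
segment therefore retains only the value at `V`, which gives the quadrature rule
`∫_K s q = |K| q(V) / 100`. It is applied to `q = div v`, which vanishes at `V` because `v` vanishes
along two independent directions there.
-/

section Polynomials

variable {ι R : Type*}

theorem totalDegree_pderiv_le [CommSemiring R] (i : ι) (p : MvPolynomial ι R) :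
    (MvPolynomial.pderiv i p).totalDegree ≤ p.totalDegree - 1 := by
  refine Finset.sup_le fun m hm => ?_
  have hcoeff : p.coeff (m + Finsupp.single i 1) ≠ 0 := by
    intro h
    rw [MvPolynomial.mem_support_iff, MvPolynomial.coeff_pderiv, h, zero_mul] at hm
    exact hm rfl
  have hdeg := MvPolynomial.le_totalDegree (MvPolynomial.mem_support_iff.2 hcoeff)
  rw [Finsupp.sum_add_index' (fun _ => rfl) (fun _ _ _ => rfl), Finsupp.sum_single_index rfl]
    at hdeg
  omega

theorem hasFDerivAt_mvPolynomial_eval [NontriviallyNormedField R] [Fintype ι] (p : MvPolynomial ι R)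
    (x : ι → R) :
    HasFDerivAt (fun y => MvPolynomial.eval y p)
      (∑ i, MvPolynomial.eval x (MvPolynomial.pderiv i p) •
        ContinuousLinearMap.proj (R := R) (φ := fun _ => R) i) x := by
  classical
  induction p using MvPolynomial.induction_on with
  | C a =>
    simp only [MvPolynomial.eval_C]
    refine (hasFDerivAt_const a x).congr_fderiv ?_
    ext h
    simp
  | add p q hp hq =>
    simp only [map_add]
    refine (hp.add hq).congr_fderiv ?_
    ext h
    simp [add_mul, Finset.sum_add_distrib]
  | mul_X p j hp =>
    simp only [map_mul, MvPolynomial.eval_X]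
    refine (hp.mul (hasFDerivAt_apply j x)).congr_fderiv ?_
    ext h
    simp [MvPolynomial.pderiv_X, Pi.single_apply, add_mul, Finset.sum_add_distrib, Finset.mul_sum,
      apply_ite, mul_assoc]

/-- The univariate polynomial `t ↦ p (x + t d)`, the restriction of `p` to a parametrised line. -/
noncomputable def restrictLine [CommSemiring R] (p : MvPolynomial ι R) (x d : ι → R) :
    Polynomial R :=
  MvPolynomial.aeval (fun i => Polynomial.C (x i) + Polynomial.C (d i) * Polynomial.X) p

theorem eval_restrictLine [CommSemiring R] (p : MvPolynomial ι R) (x d : ι → R) (t : R) :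
    (restrictLine p x d).eval t = MvPolynomial.eval (fun i => x i + d i * t) p := by
  rw [restrictLine, MvPolynomial.aeval_def, MvPolynomial.polynomial_eval_eval₂]
  have hC : (Polynomial.evalRingHom t).comp Polynomial.C = RingHom.id R := by
    ext
    simp
  simp [hC, MvPolynomial.eval₂_id]

theorem natDegree_restrictLine_le [CommSemiring R] (p : MvPolynomial ι R) (x d : ι → R) :
    (restrictLine p x d).natDegree ≤ p.totalDegree := by
  have hlin (i : ι) : (Polynomial.C (x i) + Polynomial.C (d i) * Polynomial.X).natDegree ≤ 1 := by
    compute_degree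
  simpa [restrictLine] using MvPolynomial.aeval_natDegree_le p le_rfl _ hlin

end Polynomials

section VanishingDerivative

variable {E F : Type*} [NormedAddCommGroup E] [NormedSpace ℝ E] [NormedAddCommGroup F]
  [NormedSpace ℝ F]

theorem fderiv_apply_sub_eq_zero_of_segment {f : E → F} {x y : E} (hf : DifferentiableAt ℝ f x)
    (hzero : ∀ z ∈ segment ℝ x y, f z = 0) : fderiv ℝ f x (y - x) = 0 :=
  hf.hasFDerivAt.hasFDerivWithinAt.unique_on
    ((hasFDerivWithinAt_const 0 x (segment ℝ x y)).congr hzero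
      (hzero x (left_mem_segment ℝ x y)))
    (mem_tangentConeAt_of_segment_subset subset_rfl)

theorem linearIndependent_sub_of_affineIndependent {k M : Type*} [Ring k] [AddCommGroup M]
    [Module k M] {A B V : M} (h : AffineIndependent k ![A, B, V]) :
    LinearIndependent k ![A - V, B - V] := by
  have hsub := (affineIndependent_iff_linearIndependent_vsub k _ 2).1 h
  have hinj : Function.Injective
      (![⟨0, by decide⟩, ⟨1, by decide⟩] : Fin 2 → {i : Fin 3 // i ≠ 2}) := by
    decide
  convert hsub.comp _ hinj using 1
  ext i
  fin_cases i <;> rfl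

theorem fderiv_eq_zero_of_edges (hE : Module.finrank ℝ E = 2) {A B V : E}
    (h : AffineIndependent ℝ ![A, B, V]) {f : E → F} (hf : DifferentiableAt ℝ f V)
    (hVA : ∀ x ∈ segment ℝ V A, f x = 0) (hVB : ∀ x ∈ segment ℝ V B, f x = 0) :
    fderiv ℝ f V = 0 := by
  have hspan : Submodule.span ℝ (Set.range ![A - V, B - V]) = ⊤ :=
    (linearIndependent_sub_of_affineIndependent h).span_eq_top_of_card_eq_finrank (by simp [hE])
  refine ContinuousLinearMap.coe_injective (LinearMap.ext_on_range hspan fun i => ?_)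
  fin_cases i
  · exact fderiv_apply_sub_eq_zero_of_segment hf hVA
  · exact fderiv_apply_sub_eq_zero_of_segment hf hVB

end VanishingDerivative

section Cone

/-- Collapsed coordinates on the triangle `A B V`: `(σ, r)` is sent to the point at parameter `r` on
the segment from `V` to the point of `[A, B]` at parameter `σ`. The edge `r = 0` collapses to
`V`. -/
noncomputable def coneMap {E : Type*} [AddCommGroup E] [Module ℝ E] (A B V : E) (y : ℝ × ℝ) : E :=
  AffineMap.lineMap V (AffineMap.lineMap A B y.1 : E) y.2

section Module

variable {E : Type*} [AddCommGroup E] [Module ℝ E] {A B V : E}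

theorem coneMap_eq (A B V : E) (y : ℝ × ℝ) :
    coneMap A B V y = (y.2 * (1 - y.1)) • (A - V) + (y.2 * y.1) • (B - V) + V := by
  simp only [coneMap, AffineMap.lineMap_apply_module]
  module

theorem injOn_coneMap (h : AffineIndependent ℝ ![A, B, V]) :
    Set.InjOn (coneMap A B V) {y | 0 < y.2} := by
  rintro ⟨σ, r⟩ hr ⟨σ', r'⟩ - heq
  simp only [coneMap_eq, add_left_inj] at heq
  have hind := LinearIndependent.pair_iff.1 (linearIndependent_sub_of_affineIndependent h)
    (r * (1 - σ) - r' * (1 - σ')) (r * σ - r' * σ')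
  obtain ⟨hA, hB⟩ := hind (by rw [sub_smul, sub_smul, sub_add_sub_comm, heq, sub_self])
  obtain rfl : r = r' := by linarith
  have hσ : r * (σ - σ') = 0 := by linarith
  rw [sub_eq_zero.1 ((mul_eq_zero.1 hσ).resolve_left (ne_of_gt hr))]

theorem coneMap_image_Icc_prod_Icc (A B V : E) :
    coneMap A B V '' (Set.Icc 0 1 ×ˢ Set.Icc 0 1) = convexHull ℝ {A, B, V} := by
  have hperm : ({A, B, V} : Set E) = {V, A, B} := by
    rw [Set.insert_comm V, Set.pair_comm V]
  ext x
  simp only [hperm, ← convexJoin_singleton_segment, convexJoin_singleton_left, Set.mem_iUnion,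
    segment_eq_image_lineMap, exists_prop]
  constructor
  · rintro ⟨⟨σ, r⟩, ⟨hσ, hr⟩, rfl⟩
    exact ⟨_, ⟨σ, hσ, rfl⟩, r, hr, rfl⟩
  · rintro ⟨_, ⟨σ, hσ, rfl⟩, r, hr, rfl⟩
    exact ⟨(σ, r), ⟨hσ, hr⟩, rfl⟩

theorem convexHull_eq_insert_coneMap_image (A B V : E) :
    convexHull ℝ {A, B, V} = insert V (coneMap A B V '' (Set.Icc 0 1 ×ˢ Set.Ioc 0 1)) := by
  rw [← coneMap_image_Icc_prod_Icc]
  apply Set.Subset.antisymm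
  · rintro _ ⟨⟨σ, r⟩, ⟨hσ, hr⟩, rfl⟩
    rcases hr.1.eq_or_lt with rfl | hpos
    · left
      simp [coneMap]
    · exact Or.inr ⟨(σ, r), ⟨hσ, hpos, hr.2⟩, rfl⟩
  · refine Set.insert_subset ⟨(0, 0), by simp, by simp [coneMap]⟩ ?_
    exact Set.image_mono (Set.prod_mono_right Set.Ioc_subset_Icc_self)

theorem apply_coneMap_of_barycentric {β : E →ᵃ[ℝ] ℝ} (hβV : β V = 1) (hβA : β A = 0)
    (hβB : β B = 0) (y : ℝ × ℝ) : β (coneMap A B V y) = 1 - y.2 := by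
  rw [coneMap, AffineMap.apply_lineMap, AffineMap.apply_lineMap, hβV, hβA, hβB]
  simp [AffineMap.lineMap_apply, neg_add_eq_sub]

end Module

section Plane

variable {A B V : ℝ × ℝ}

/-- The signed area of the parallelogram spanned by `a` and `b`, which is the Jacobian factor of
collapsed coordinates. -/
def planarCross (a b : ℝ × ℝ) : ℝ := a.1 * b.2 - a.2 * b.1

/-- The Jacobian matrix of `coneMap A B V` at `(σ, r)`, as a continuous linear map. -/
noncomputable def fderivConeMap (A B V y : ℝ × ℝ) : ℝ × ℝ →L[ℝ] ℝ × ℝ :=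
  (Matrix.toLin (.finTwoProd ℝ) (.finTwoProd ℝ)
    !![y.2 * (B - A).1, (A - V).1 + y.1 * (B - A).1;
       y.2 * (B - A).2, (A - V).2 + y.1 * (B - A).2]).toContinuousLinearMap

theorem hasFDerivAt_coneMap (A B V y : ℝ × ℝ) :
    HasFDerivAt (coneMap A B V) (fderivConeMap A B V y) y := by
  have hσ : HasFDerivAt (fun y : ℝ × ℝ => y.1) (ContinuousLinearMap.fst ℝ ℝ ℝ) y := hasFDerivAt_fst
  have hr : HasFDerivAt (fun y : ℝ × ℝ => y.2) (ContinuousLinearMap.snd ℝ ℝ ℝ) y := hasFDerivAt_snd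
  have hcone := (((hr.mul (hσ.const_sub 1)).smul_const (A - V)).add
    ((hr.mul hσ).smul_const (B - V))).add_const V
  rw [funext (coneMap_eq A B V)]
  refine hcone.congr_fderiv (ContinuousLinearMap.ext fun h => ?_)
  ext <;>
    simp [fderivConeMap, Matrix.toLin_finTwoProd_apply] <;>
    ring

theorem det_fderivConeMap (A B V y : ℝ × ℝ) :
    (fderivConeMap A B V y).det = y.2 * planarCross (B - A) (A - V) := by
  simp only [fderivConeMap, planarCross, LinearMap.det_toContinuousLinearMap, LinearMap.det_toLin,
    Matrix.det_fin_two_of]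
  ring

theorem continuous_coneMap (A B V : ℝ × ℝ) : Continuous (coneMap A B V) :=
  continuous_iff_continuousAt.2 fun y => (hasFDerivAt_coneMap A B V y).continuousAt

theorem integrableOn_smul_comp_coneMap {E : Type*} [NormedAddCommGroup E] [NormedSpace ℝ E]
    {f : ℝ × ℝ → E} (hf : ContinuousOn f (convexHull ℝ {A, B, V})) :
    IntegrableOn (fun y => y.2 • f (coneMap A B V y)) (Set.Icc 0 1 ×ˢ Set.Ioc 0 1) := by
  have hmaps : Set.MapsTo (coneMap A B V) (Set.Icc 0 1 ×ˢ Set.Icc 0 1)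
      (convexHull ℝ {A, B, V}) := by
    rw [← coneMap_image_Icc_prod_Icc]
    exact Set.mapsTo_image _ _
  have hcont : ContinuousOn (fun y => y.2 • f (coneMap A B V y)) (Set.Icc 0 1 ×ˢ Set.Icc 0 1) :=
    continuousOn_snd.smul (hf.comp (continuous_coneMap A B V).continuousOn hmaps)
  exact (hcont.integrableOn_compact (isCompact_Icc.prod isCompact_Icc)).mono_set
    (Set.prod_mono_right Set.Ioc_subset_Icc_self)

theorem setIntegral_triangle_eq_jacobian_smul {E : Type*} [NormedAddCommGroup E] [NormedSpace ℝ E]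
    (h : AffineIndependent ℝ ![A, B, V]) {f : ℝ × ℝ → E}
    (hf : ContinuousOn f (convexHull ℝ {A, B, V})) :
    ∫ x in convexHull ℝ {A, B, V}, f x =
      |planarCross (B - A) (A - V)| •
        ∫ σ in (0 : ℝ)..1, ∫ r in (0 : ℝ)..1, r • f (coneMap A B V (σ, r)) := by
  have hmeas : MeasurableSet (Set.Icc (0 : ℝ) 1 ×ˢ Set.Ioc (0 : ℝ) 1) :=
    measurableSet_Icc.prod measurableSet_Ioc
  calc ∫ x in convexHull ℝ {A, B, V}, f x
    _ = ∫ x in coneMap A B V '' (Set.Icc 0 1 ×ˢ Set.Ioc 0 1), f x := by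
      rw [convexHull_eq_insert_coneMap_image]
      exact setIntegral_congr_set (insert_ae_eq_self V _)
    _ = ∫ y in Set.Icc (0 : ℝ) 1 ×ˢ Set.Ioc (0 : ℝ) 1,
          |(fderivConeMap A B V y).det| • f (coneMap A B V y) :=
      integral_image_eq_integral_abs_det_fderiv_smul volume hmeas
        (fun y _ => (hasFDerivAt_coneMap A B V y).hasFDerivWithinAt)
        ((injOn_coneMap h).mono fun y hy => hy.2.1) f
    _ = ∫ y in Set.Icc (0 : ℝ) 1 ×ˢ Set.Ioc (0 : ℝ) 1,
          |planarCross (B - A) (A - V)| • y.2 • f (coneMap A B V y) := by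
      refine setIntegral_congr_fun hmeas fun y hy => ?_
      simp only [det_fderivConeMap]
      rw [abs_mul, abs_of_pos hy.2.1, mul_comm, mul_smul]
    _ = |planarCross (B - A) (A - V)| •
          ∫ σ in (0 : ℝ)..1, ∫ r in (0 : ℝ)..1, r • f (coneMap A B V (σ, r)) := by
      rw [integral_smul, Measure.volume_eq_prod, setIntegral_prod]
      · simp only [intervalIntegral.integral_of_le zero_le_one, integral_Icc_eq_integral_Ioc]
      · exact integrableOn_smul_comp_coneMap hf

theorem volume_real_triangle (h : AffineIndependent ℝ ![A, B, V]) :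
    volume.real (convexHull ℝ {A, B, V}) = |planarCross (B - A) (A - V)| / 2 := by
  have hone := setIntegral_triangle_eq_jacobian_smul h (f := fun _ => (1 : ℝ)) continuousOn_const
  simpa [div_eq_mul_inv] using hone

theorem setIntegral_triangle {E : Type*} [NormedAddCommGroup E] [NormedSpace ℝ E]
    (h : AffineIndependent ℝ ![A, B, V]) {f : ℝ × ℝ → E}
    (hf : ContinuousOn f (convexHull ℝ {A, B, V})) :
    ∫ x in convexHull ℝ {A, B, V}, f x =
      (2 * volume.real (convexHull ℝ {A, B, V})) •
        ∫ σ in (0 : ℝ)..1, ∫ r in (0 : ℝ)..1, r • f (coneMap A B V (σ, r)) := by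
  rw [volume_real_triangle h, mul_div_cancel₀ _ two_ne_zero,
    setIntegral_triangle_eq_jacobian_smul h hf]

end Plane

end Cone

section Quadrature

/-- The profile `e` of the sting function `s = e ∘ β`: the Jacobi polynomial `P₃^(2,0)(2t - 1)`,
normalised by `e(1) = 1`. -/
noncomputable def stingProfile (t : ℝ) : ℝ := (56 * t ^ 3 - 63 * t ^ 2 + 18 * t - 1) / 10

theorem integral_pow_mul_stingProfile (n : ℕ) :
    ∫ r in (0 : ℝ)..1, r ^ n * stingProfile (1 - r) =
      (2 - n) * (3 - n) * (4 - n) / (10 * (n + 1) * (n + 2) * (n + 3) * (n + 4)) := by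
  have hexpand (r : ℝ) : r ^ n * stingProfile (1 - r) =
      r ^ n - 6 * r ^ (n + 1) + 21 / 2 * r ^ (n + 2) - 28 / 5 * r ^ (n + 3) := by
    rw [stingProfile]
    ring
  have hint {f : ℝ → ℝ} (hf : Continuous f) : IntervalIntegrable f volume 0 1 :=
    hf.intervalIntegrable 0 1
  simp only [hexpand]
  rw [intervalIntegral.integral_sub (hint (by fun_prop)) (hint (by fun_prop)),
    intervalIntegral.integral_add (hint (by fun_prop)) (hint (by fun_prop)),
    intervalIntegral.integral_sub (hint (by fun_prop)) (hint (by fun_prop))]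
  simp only [intervalIntegral.integral_const_mul, integral_pow]
  push_cast
  field_simp
  ring

theorem integral_mul_stingProfile_mul_eval {p : Polynomial ℝ} (hp : p.natDegree ≤ 3) :
    ∫ r in (0 : ℝ)..1, r * (stingProfile (1 - r) * p.eval r) = p.eval 0 / 200 := by
  have hexpand (r : ℝ) : r * (stingProfile (1 - r) * p.eval r) =
      ∑ k ∈ Finset.range 4, p.coeff k * (r ^ (k + 1) * stingProfile (1 - r)) := by
    rw [Polynomial.eval_eq_sum_range' (Nat.lt_succ_of_le hp), Finset.mul_sum, Finset.mul_sum]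
    exact Finset.sum_congr rfl fun k _ => by ring
  have hint (k : ℕ) : IntervalIntegrable
      (fun r => p.coeff k * (r ^ (k + 1) * stingProfile (1 - r))) volume 0 1 := by
    unfold stingProfile
    exact Continuous.intervalIntegrable (by fun_prop) 0 1
  simp only [hexpand]
  rw [intervalIntegral.integral_finsetSum fun k _ => hint k]
  simp only [intervalIntegral.integral_const_mul, integral_pow_mul_stingProfile,
    Finset.sum_range_succ, Finset.sum_range_zero, ← Polynomial.coeff_zero_eq_eval_zero]
  norm_num
  ring

theorem setIntegral_stingProfile_mul_eval {A B V : ℝ × ℝ} (h : AffineIndependent ℝ ![A, B, V])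
    {β : (ℝ × ℝ) →ᵃ[ℝ] ℝ} (hβV : β V = 1) (hβA : β A = 0) (hβB : β B = 0)
    {q : MvPolynomial (Fin 2) ℝ} (hq : q.totalDegree ≤ 3) :
    ∫ x in convexHull ℝ {A, B, V}, stingProfile (β x) * MvPolynomial.eval ![x.1, x.2] q =
      volume.real (convexHull ℝ {A, B, V}) / 100 * MvPolynomial.eval ![V.1, V.2] q := by
  have hcont : Continuous fun x : ℝ × ℝ =>
      stingProfile (β x) * MvPolynomial.eval ![x.1, x.2] q := by
    have hβ := β.continuous_of_finiteDimensional
    have hqcont := (MvPolynomial.continuous_eval q).comp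
      (by fun_prop : Continuous fun x : ℝ × ℝ => ![x.1, x.2])
    refine Continuous.mul ?_ hqcont
    unfold stingProfile
    fun_prop
  have hray (σ : ℝ) : ∫ r in (0 : ℝ)..1, r • (stingProfile (β (coneMap A B V (σ, r))) *
      MvPolynomial.eval ![(coneMap A B V (σ, r)).1, (coneMap A B V (σ, r)).2] q) =
        MvPolynomial.eval ![V.1, V.2] q / 200 := by
    set d : ℝ × ℝ := AffineMap.lineMap A B σ - V with hd
    set p := restrictLine q ![V.1, V.2] ![d.1, d.2] with hp
    have hline (r : ℝ) : MvPolynomial.eval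
        ![(coneMap A B V (σ, r)).1, (coneMap A B V (σ, r)).2] q = p.eval r := by
      rw [hp, eval_restrictLine]
      congr 2
      ext i
      fin_cases i <;> simp [coneMap, AffineMap.lineMap_apply, hd] <;> ring
    have hV : MvPolynomial.eval ![V.1, V.2] q = p.eval 0 := by
      simpa [coneMap] using hline 0
    simp only [apply_coneMap_of_barycentric hβV hβA hβB, hline, hV, smul_eq_mul]
    exact integral_mul_stingProfile_mul_eval ((natDegree_restrictLine_le _ _ _).trans hq)
  rw [setIntegral_triangle h hcont.continuousOn]
  simp only [hray, intervalIntegral.integral_const]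
  rw [smul_eq_mul, smul_eq_mul]
  ring

end Quadrature

section Divergence

theorem hasFDerivAt_eval_fst_snd (p : MvPolynomial (Fin 2) ℝ) (x : ℝ × ℝ) :
    HasFDerivAt (fun y : ℝ × ℝ => MvPolynomial.eval ![y.1, y.2] p)
      (MvPolynomial.eval ![x.1, x.2] (MvPolynomial.pderiv 0 p) • ContinuousLinearMap.fst ℝ ℝ ℝ +
        MvPolynomial.eval ![x.1, x.2] (MvPolynomial.pderiv 1 p) • ContinuousLinearMap.snd ℝ ℝ ℝ)
      x := by
  have hcoord : HasFDerivAt (fun y : ℝ × ℝ => ![y.1, y.2])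
      (ContinuousLinearMap.pi ![ContinuousLinearMap.fst ℝ ℝ ℝ, ContinuousLinearMap.snd ℝ ℝ ℝ])
      x := by
    refine hasFDerivAt_pi'' fun i => ?_
    fin_cases i
    · exact hasFDerivAt_fst
    · exact hasFDerivAt_snd
  refine ((hasFDerivAt_mvPolynomial_eval p ![x.1, x.2]).comp x hcoord).congr_fderiv ?_
  ext <;> simp

theorem differentiable_eval_pair (p₁ p₂ : MvPolynomial (Fin 2) ℝ) :
    Differentiable ℝ fun y : ℝ × ℝ =>
      (MvPolynomial.eval ![y.1, y.2] p₁, MvPolynomial.eval ![y.1, y.2] p₂) := fun x =>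
  ((hasFDerivAt_eval_fst_snd p₁ x).prodMk (hasFDerivAt_eval_fst_snd p₂ x)).differentiableAt

theorem pdiv_eval (p₁ p₂ : MvPolynomial (Fin 2) ℝ) (x : ℝ × ℝ) :
    pdiv (fun y => (MvPolynomial.eval ![y.1, y.2] p₁, MvPolynomial.eval ![y.1, y.2] p₂)) x =
      MvPolynomial.eval ![x.1, x.2] (MvPolynomial.pderiv 0 p₁ + MvPolynomial.pderiv 1 p₂) := by
  simp [pdiv, (hasFDerivAt_eval_fst_snd _ x).fderiv]

theorem pdiv_eq_zero_of_edges {A B V : ℝ × ℝ} (h : AffineIndependent ℝ ![A, B, V])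
    {v : ℝ × ℝ → ℝ × ℝ} (hv : DifferentiableAt ℝ v V)
    (hVA : ∀ x ∈ segment ℝ V A, v x = 0) (hVB : ∀ x ∈ segment ℝ V B, v x = 0) :
    pdiv v V = 0 := by
  have hzero : HasFDerivAt (𝕜 := ℝ) v 0 V := by
    rw [← fderiv_eq_zero_of_edges (by simp) h hv hVA hVB]
    exact hv.hasFDerivAt
  simp [pdiv, hzero.fst.fderiv, hzero.snd.fderiv]

end Divergence

theorem sting_is_spurious_at_boundary_singular_vertex_general (A B V : ℝ × ℝ)
    (hindep : AffineIndependent ℝ ![A, B, V])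
    (β : (ℝ × ℝ) →ᵃ[ℝ] ℝ) (hβV : β V = 1) (hβA : β A = 0) (hβB : β B = 0)
    (s : ℝ × ℝ → ℝ)
    (hs : ∀ x, s x = (56 * (β x) ^ 3 - 63 * (β x) ^ 2 + 18 * (β x) - 1) / 10)
    (p₁ p₂ : MvPolynomial (Fin 2) ℝ)
    (hp₁ : p₁.totalDegree ≤ 4) (hp₂ : p₂.totalDegree ≤ 4)
    (v : ℝ × ℝ → ℝ × ℝ)
    (hv : ∀ x, v x = (MvPolynomial.eval ![x.1, x.2] p₁, MvPolynomial.eval ![x.1, x.2] p₂)) :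
    ∫ x in convexHull ℝ {A, B, V}, s x * pdiv v x =
      volume.real (convexHull ℝ {A, B, V}) / 100 * pdiv v V := by
  obtain rfl : s = fun x => stingProfile (β x) := funext hs
  obtain rfl := funext hv
  have hdeg : (MvPolynomial.pderiv 0 p₁ + MvPolynomial.pderiv 1 p₂).totalDegree ≤ 3 := by
    have h₁ := totalDegree_pderiv_le 0 p₁
    have h₂ := totalDegree_pderiv_le 1 p₂
    exact (MvPolynomial.totalDegree_add _ _).trans (max_le (by omega) (by omega))
  simp only [pdiv_eval]
  exact setIntegral_stingProfile_mul_eval hindep hβV hβA hβB hdeg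

/-- Subsection 5.3: at an exactly singular boundary vertex `V` whose basin is a single
triangle `K = convexHull {A, B, V}`, the sting function `s = e ∘ β` is orthogonal to the
divergence of every quartic vector field vanishing on the two edges `[V,A]`, `[V,B]`. -/
theorem sting_is_spurious_at_boundary_singular_vertex (A B V : ℝ × ℝ)
    (hindep : AffineIndependent ℝ ![A, B, V])
    (β : (ℝ × ℝ) →ᵃ[ℝ] ℝ) (hβV : β V = 1) (hβA : β A = 0) (hβB : β B = 0)
    (s : ℝ × ℝ → ℝ)
    (hs : ∀ x, s x = (56 * (β x) ^ 3 - 63 * (β x) ^ 2 + 18 * (β x) - 1) / 10)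
    (p₁ p₂ : MvPolynomial (Fin 2) ℝ)
    (hp₁ : p₁.totalDegree ≤ 4) (hp₂ : p₂.totalDegree ≤ 4)
    (v : ℝ × ℝ → ℝ × ℝ)
    (hv : ∀ x, v x = (MvPolynomial.eval ![x.1, x.2] p₁, MvPolynomial.eval ![x.1, x.2] p₂))
    (hVA : ∀ x ∈ segment ℝ V A, v x = 0)
    (hVB : ∀ x ∈ segment ℝ V B, v x = 0) :
    ∫ x in convexHull ℝ {A, B, V}, s x * pdiv v x = 0 := by
  have hdiff : DifferentiableAt ℝ v V := funext hv ▸ differentiable_eval_pair p₁ p₂ V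
  rw [sting_is_spurious_at_boundary_singular_vertex_general A B V hindep β hβV hβA hβB s hs
    p₁ p₂ hp₁ hp₂ v hv, pdiv_eq_zero_of_edges hindep hdiff hVA hVB, mul_zero]
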